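/- Fix a real number $\hbar>0$ and an integer $N\ge 2$; let $i$ be the imaginary unit, $\Gamma$ the complex Gamma function, and $\hbar^z:=\exp(z\log\hbar)$ for $z\in\mathbb{C}$. A Gelfand–Zetlin array is a family $\gamma=(\gamma_{nj})_{1\le j\le n\le N}$ of complex numbers; let $e_{nj}$ be the array equal to $1$ in position $(n,j)$ and $0$ elsewhere. The array $\gamma$ is called non-resonant if for all $1\le n\le N-1$ and $1\le j<s\le n$ the number $(\gamma_{nj}-\gamma_{ns})/(i\hbar)$ is not an integer. Put $$s_n(\gamma_n,\gamma_{n+1})=\prod_{k=1}^{n}\prod_{m=1}^{n+1}\hbar^{\frac{\gamma_{nk}-\gamma_{n+1,m}}{i\hbar}+\frac12}\,\Gamma\Big(\frac{\gamma_{nk}-\gamma_{n+1,m}}{i\hbar}+\frac12\Big),\qquad w_N(\gamma)=e^{-\frac{\pi}{\hbar}\sum_{n=1}^{N-1}(n-1)\sum_{j=1}^{n}\gamma_{nj}}\prod_{n=1}^{N-1}s_n(\gamma_n,\gamma_{n+1}),$$ and, for $1\le n\le N-1$ and a function $f$ of Gelfand–Zetlin arrays, $$(E_{n,n+1}f)(\gamma)=-\frac{1}{i\hbar}\sum_{j=1}^{n}\frac{\prod_{r=1}^{n+1}(\gamma_{nj}-\gamma_{n+1,r}-\frac{i\hbar}{2})}{\prod_{s\le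 n,\,s\ne j}(\gamma_{nj}-\gamma_{ns})}\,f(\gamma-i\hbar e_{nj}).$$ Let $\gamma$ be a non-resonant Gelfand–Zetlin array such that for all $1\le n\le N-1$, $1\le k\le n$, $1\le m\le n+1$ the number $(\gamma_{nk}-\gamma_{n+1,m})/(i\hbar)+\frac12$ is not an integer. Then for every $1\le n\le N-1$ $$(E_{n,n+1}w_N)(\gamma)=-i\,\hbar^{-1}\,w_N(\gamma)\sum_{j=1}^{n}\frac{\prod_{r=1}^{n-1}(\gamma_{nj}-\gamma_{n-1,r}-\frac{i\hbar}{2})}{\prod_{s\le n,\,s\ne j}(\gamma_{nj}-\gamma_{ns})},$$ where an empty product equals $1$ (so the numerator is $1$ for $n=1$). -/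

import Mathlib

open Finset

noncomputable section

/-- A Gelfand–Zetlin array: complex values `γ n j`. Only the entries with `1 ≤ j ≤ n ≤ N`
are ever used; the others are irrelevant padding. -/
abbrev GZ := ℕ → ℕ → ℂ

/-- Shift of the single variable `γ n j` by `c`. -/
def gzShift (c : ℂ) (n j : ℕ) (γ : GZ) : GZ :=
  fun a b => if a = n ∧ b = j then γ a b + c else γ a b

/-- The raising Gelfand–Zetlin operator `E_{n,n+1}`. -/
def Eraise (ℏ : ℝ) (n : ℕ) (f : GZ → ℂ) : GZ → ℂ := fun γ =>
  -(1 / (Complex.I * ℏ)) * ∑ j ∈ Icc 1 n,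
    ((∏ r ∈ Icc 1 (n + 1), (γ n j - γ (n + 1) r - Complex.I * ℏ / 2)) /
      ∏ s ∈ (Icc 1 n).erase j, (γ n j - γ n s)) * f (gzShift (-(Complex.I * ℏ)) n j γ)

/-- Non-resonance: no two same-level entries differ by an integer multiple of `iℏ`. -/
def NonResonant (ℏ : ℝ) (N : ℕ) (γ : GZ) : Prop :=
  ∀ n ∈ Icc 1 (N - 1), ∀ j s : ℕ, 1 ≤ j → j < s → s ≤ n →
    ∀ m : ℤ, (γ n j - γ n s) / (Complex.I * ℏ) ≠ (m : ℂ)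

/-- `ℏ^z := exp(z log ℏ)`. -/
def hpow (ℏ : ℝ) (z : ℂ) : ℂ := Complex.exp (z * (Real.log ℏ : ℂ))

/-- The factor `s_n(γ_n, γ_{n+1})`. -/
def sW (ℏ : ℝ) (n : ℕ) (γ : GZ) : ℂ :=
  ∏ k ∈ Icc 1 n, ∏ m ∈ Icc 1 (n + 1),
    hpow ℏ ((γ n k - γ (n + 1) m) / (Complex.I * ℏ) + 1 / 2) *
      Complex.Gamma ((γ n k - γ (n + 1) m) / (Complex.I * ℏ) + 1 / 2)

/-- The Whittaker vector `w_N`. -/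
def wWhit (ℏ : ℝ) (N : ℕ) (γ : GZ) : ℂ :=
  Complex.exp (-((Real.pi / ℏ : ℝ) : ℂ) *
      ∑ n ∈ Icc 1 (N - 1), ((n : ℂ) - 1) * ∑ j ∈ Icc 1 n, γ n j) *
    ∏ n ∈ Icc 1 (N - 1), sW ℏ n γ

end

/-- Lowering the exponent `z` by one in `ℏ^z Γ(z)` divides by `ℏ (z - 1)`. -/
theorem hpow_mul_Gamma_sub_one {ℏ : ℝ} (hℏ : 0 < ℏ) {z : ℂ} (hz : z ≠ 1) :
    hpow ℏ (z - 1) * Complex.Gamma (z - 1) * (ℏ * (z - 1)) = hpow ℏ z * Complex.Gamma z := by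
  have hG := Complex.Gamma_add_one (z - 1) (sub_ne_zero.mpr hz)
  rw [sub_add_cancel] at hG
  have hp : hpow ℏ z = hpow ℏ (z - 1) * ℏ := by
    have he : Complex.exp (Real.log ℏ : ℂ) = ℏ := by
      rw [← Complex.ofReal_exp, Real.exp_log hℏ]
    calc hpow ℏ z = Complex.exp ((z - 1) * (Real.log ℏ : ℂ) + (Real.log ℏ : ℂ)) := by
          rw [hpow]
          congr 1
          ring
      _ = hpow ℏ (z - 1) * ℏ := by rw [Complex.exp_add, he, hpow]
  rw [hp, hG]
  ring

/-- Raising the exponent `z` by one in `ℏ^z Γ(z)` multiplies by `ℏ z`. -/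
theorem hpow_mul_Gamma_add_one {ℏ : ℝ} (hℏ : 0 < ℏ) {z : ℂ} (hz : z ≠ 0) :
    hpow ℏ (z + 1) * Complex.Gamma (z + 1) = hpow ℏ z * Complex.Gamma z * (ℏ * z) := by
  have h := hpow_mul_Gamma_sub_one hℏ (z := z + 1) (by simpa using hz)
  rw [add_sub_cancel_right] at h
  exact h.symm

/-- Effect on `s_n` of the shift of `γ n j` by `-iℏ`. -/
theorem prod_mul_sW_gzShift {ℏ : ℝ} (hℏ : 0 < ℏ) {n j : ℕ} (hj : j ∈ Icc 1 n) (γ : GZ)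
    (h : ∀ m ∈ Icc 1 (n + 1), (γ n j - γ (n + 1) m) / (Complex.I * ℏ) + 1 / 2 ≠ 1) :
    (∏ r ∈ Icc 1 (n + 1), (γ n j - γ (n + 1) r - Complex.I * ℏ / 2)) *
        sW ℏ n (gzShift (-(Complex.I * ℏ)) n j γ) =
      Complex.I ^ (n + 1) * sW ℏ n γ := by
  have hℏ0 : (ℏ : ℂ) ≠ 0 := by exact_mod_cast hℏ.ne'
  have hI := Complex.I_ne_zero
  unfold sW
  rw [← mul_prod_erase _ _ hj, ← mul_prod_erase (Icc 1 n) _ hj, ← mul_assoc, ← mul_assoc]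
  congr 1
  · rw [← prod_mul_distrib]
    have hc : Complex.I ^ (n + 1) = ∏ _m ∈ Icc 1 (n + 1), Complex.I := by simp
    rw [hc, ← prod_mul_distrib]
    refine prod_congr rfl fun m hm => ?_
    have hz : (γ n j + -(Complex.I * ℏ) - γ (n + 1) m) / (Complex.I * ℏ) + 1 / 2 =
        (γ n j - γ (n + 1) m) / (Complex.I * ℏ) + 1 / 2 - 1 := by
      field_simp
      ring
    have hA : γ n j - γ (n + 1) m - Complex.I * ℏ / 2 =
        Complex.I * (ℏ * ((γ n j - γ (n + 1) m) / (Complex.I * ℏ) + 1 / 2 - 1)) := by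
      field_simp
      ring
    simp only [gzShift, and_self, if_true, Nat.succ_ne_self, false_and, if_false]
    rw [hz, ← hpow_mul_Gamma_sub_one hℏ (h m hm), hA]
    ring
  · refine prod_congr rfl fun k hk => prod_congr rfl fun m _ => ?_
    simp [gzShift, ne_of_mem_erase hk]

/-- Effect on `s_n` of the shift of `γ (n + 1) j` by `-iℏ`. -/
theorem sW_gzShift_succ {ℏ : ℝ} (hℏ : 0 < ℏ) {n j : ℕ} (hj : j ∈ Icc 1 (n + 1)) (γ : GZ)
    (h : ∀ k ∈ Icc 1 n, (γ n k - γ (n + 1) j) / (Complex.I * ℏ) + 1 / 2 ≠ 0) :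
    sW ℏ n (gzShift (-(Complex.I * ℏ)) (n + 1) j γ) =
      (Complex.I ^ n * ∏ r ∈ Icc 1 n, (γ (n + 1) j - γ n r - Complex.I * ℏ / 2)) * sW ℏ n γ := by
  have hℏ0 : (ℏ : ℂ) ≠ 0 := by exact_mod_cast hℏ.ne'
  have hI := Complex.I_ne_zero
  have hc : Complex.I ^ n = ∏ _k ∈ Icc 1 n, Complex.I := by simp
  unfold sW
  rw [hc, ← prod_mul_distrib, ← prod_mul_distrib]
  refine prod_congr rfl fun k hk => ?_
  rw [← mul_prod_erase _ _ hj, ← mul_prod_erase (Icc 1 (n + 1)) _ hj, ← mul_assoc]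
  congr 1
  · have hz : (γ n k - (γ (n + 1) j + -(Complex.I * ℏ))) / (Complex.I * ℏ) + 1 / 2 =
        (γ n k - γ (n + 1) j) / (Complex.I * ℏ) + 1 / 2 + 1 := by
      field_simp
      ring
    have hB : Complex.I * (γ (n + 1) j - γ n k - Complex.I * ℏ / 2) =
        ℏ * ((γ n k - γ (n + 1) j) / (Complex.I * ℏ) + 1 / 2) := by
      field_simp
      linear_combination (2 * γ (n + 1) j - 2 * γ n k - Complex.I * ℏ) * Complex.I_sq
    simp only [gzShift, and_self, if_true, (Nat.succ_ne_self n).symm, false_and, if_false]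
    rw [hz, hpow_mul_Gamma_add_one hℏ (h k hk), hB]
    ring
  · refine prod_congr rfl fun m hm => ?_
    simp [gzShift, ne_of_mem_erase hm]

/-- `s_a` does not depend on the rows other than `a` and `a + 1`. -/
theorem sW_gzShift_of_ne (ℏ : ℝ) (c : ℂ) {a n : ℕ} (h : a ≠ n) (h' : a + 1 ≠ n) (j : ℕ) (γ : GZ) :
    sW ℏ a (gzShift c n j γ) = sW ℏ a γ := by
  simp [sW, gzShift, h, h']

/-- The weighted sum of the entries in the exponent of `w_N` under a shift of `γ n j`. -/
theorem sum_weighted_gzShift (c : ℂ) {N n j : ℕ} (hn : n ∈ Icc 1 (N - 1)) (hj : j ∈ Icc 1 n)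
    (γ : GZ) :
    ∑ a ∈ Icc 1 (N - 1), ((a : ℂ) - 1) * ∑ b ∈ Icc 1 a, gzShift c n j γ a b =
      (∑ a ∈ Icc 1 (N - 1), ((a : ℂ) - 1) * ∑ b ∈ Icc 1 a, γ a b) + ((n : ℂ) - 1) * c := by
  have hs : ∀ a b, gzShift c n j γ a b = γ a b + if a = n then (if b = j then c else 0) else 0 := by
    intro a b
    by_cases ha : a = n <;> by_cases hb : b = j <;> simp [gzShift, ha, hb]
  simp only [hs, sum_add_distrib, mul_add]
  congr 1
  rw [sum_eq_single_of_mem n hn fun a _ ha => by simp [ha]]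
  simp only [if_true, sum_ite_eq', hj]

/-- Effect on the exponential prefactor of `w_N` of the shift of `γ n j` by `-iℏ`. -/
theorem exp_prefactor_gzShift {ℏ : ℝ} (hℏ : 0 < ℏ) {N n j : ℕ} (hn : n + 1 ∈ Icc 1 (N - 1))
    (hj : j ∈ Icc 1 (n + 1)) (γ : GZ) :
    Complex.exp (-((Real.pi / ℏ : ℝ) : ℂ) * ∑ a ∈ Icc 1 (N - 1), ((a : ℂ) - 1) *
        ∑ b ∈ Icc 1 a, gzShift (-(Complex.I * ℏ)) (n + 1) j γ a b) =
      (-1) ^ n * Complex.exp (-((Real.pi / ℏ : ℝ) : ℂ) *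
        ∑ a ∈ Icc 1 (N - 1), ((a : ℂ) - 1) * ∑ b ∈ Icc 1 a, γ a b) := by
  have hℏ0 : (ℏ : ℂ) ≠ 0 := by exact_mod_cast hℏ.ne'
  have he : -((Real.pi / ℏ : ℝ) : ℂ) * ((((n + 1 : ℕ) : ℂ) - 1) * -(Complex.I * ℏ)) =
      n * (Real.pi * Complex.I) := by
    push_cast
    field_simp
    ring
  rw [sum_weighted_gzShift _ hn hj, mul_add, Complex.exp_add, he, Complex.exp_nat_mul,
    Complex.exp_pi_mul_I, mul_comm]

/-- Effect on `w_N` of the shift of `γ (n + 1) j` by `-iℏ`. -/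
theorem prod_mul_wWhit_gzShift {ℏ : ℝ} (hℏ : 0 < ℏ) {N n j : ℕ} (hn : n + 1 ∈ Icc 1 (N - 1))
    (hj : j ∈ Icc 1 (n + 1)) (γ : GZ)
    (h : ∀ m ∈ Icc 1 (n + 2), (γ (n + 1) j - γ (n + 2) m) / (Complex.I * ℏ) + 1 / 2 ≠ 1)
    (h' : ∀ k ∈ Icc 1 n, (γ n k - γ (n + 1) j) / (Complex.I * ℏ) + 1 / 2 ≠ 0) :
    (∏ r ∈ Icc 1 (n + 2), (γ (n + 1) j - γ (n + 2) r - Complex.I * ℏ / 2)) *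
        wWhit ℏ N (gzShift (-(Complex.I * ℏ)) (n + 1) j γ) =
      -((∏ r ∈ Icc 1 n, (γ (n + 1) j - γ n r - Complex.I * ℏ / 2)) * wWhit ℏ N γ) := by
  set B := ∏ r ∈ Icc 1 n, (γ (n + 1) j - γ n r - Complex.I * ℏ / 2) with hB
  have hlow : ∏ a ∈ (Icc 1 (N - 1)).erase (n + 1),
        sW ℏ a (gzShift (-(Complex.I * ℏ)) (n + 1) j γ) =
      Complex.I ^ n * B * ∏ a ∈ (Icc 1 (N - 1)).erase (n + 1), sW ℏ a γ := by
    have hfac : ∀ a ∈ (Icc 1 (N - 1)).erase (n + 1),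
        sW ℏ a (gzShift (-(Complex.I * ℏ)) (n + 1) j γ) =
          (if a = n then Complex.I ^ n * B else 1) * sW ℏ a γ := by
      intro a ha
      split_ifs with han
      · rw [han]
        exact sW_gzShift_succ hℏ hj γ h'
      · rw [one_mul, sW_gzShift_of_ne _ _ (ne_of_mem_erase ha) (by simpa using han)]
    rw [prod_congr rfl hfac, prod_mul_distrib, prod_ite_eq']
    congr 1
    split_ifs with hmem
    · rfl
    · obtain rfl : n = 0 := by
        simp only [mem_erase, mem_Icc] at hmem hn
        omega
      simp [hB]
  have hsign : (-1 : ℂ) ^ n * Complex.I ^ (n + 2) * Complex.I ^ n = -1 := by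
    have : (-1 : ℂ) ^ n * Complex.I ^ (n + 2) * Complex.I ^ n =
        (-1 * (Complex.I * Complex.I)) ^ n * Complex.I ^ 2 := by
      rw [mul_pow, mul_pow]
      ring
    rw [this]
    simp
  unfold wWhit
  rw [exp_prefactor_gzShift hℏ hn hj, ← mul_prod_erase _ _ hn, ← mul_prod_erase _ (sW ℏ · γ) hn,
    hlow]
  have hdiag := prod_mul_sW_gzShift hℏ hj γ h
  generalize Complex.exp _ = e
  generalize ∏ a ∈ (Icc 1 (N - 1)).erase (n + 1), sW ℏ a γ = P
  linear_combination ((-1) ^ n * e * (Complex.I ^ n * B) * P) * hdiag +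
    (e * B * P * sW ℏ (n + 1) γ) * hsign

/-- The action of `E_{n,n+1}` on the Whittaker vector `w_N`; the constant is
`−i·ℏ⁻¹ = (iℏ)⁻¹`. -/
theorem Eraise_wN_eq (ℏ : ℝ) (hℏ : 0 < ℏ) (N : ℕ) (hN : 2 ≤ N)
    (γ : GZ) (hγ : NonResonant ℏ N γ)
    (hγ' : ∀ n ∈ Icc 1 (N - 1), ∀ k ∈ Icc 1 n, ∀ m ∈ Icc 1 (n + 1),
      ∀ z : ℤ, (γ n k - γ (n + 1) m) / (Complex.I * ℏ) + 1 / 2 ≠ (z : ℂ)) :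
    ∀ n : ℕ, 1 ≤ n → n ≤ N - 1 →
      Eraise ℏ n (wWhit ℏ N) γ =
        -Complex.I * (ℏ : ℂ)⁻¹ * wWhit ℏ N γ *
          ∑ j ∈ Icc 1 n,
            (∏ r ∈ Icc 1 (n - 1), (γ n j - γ (n - 1) r - Complex.I * ℏ / 2)) /
              ∏ s ∈ (Icc 1 n).erase j, (γ n j - γ n s) := by
  intro n hn hnN
  obtain ⟨n, rfl⟩ : ∃ m, n = m + 1 := ⟨n - 1, by omega⟩
  have hmem : n + 1 ∈ Icc 1 (N - 1) := mem_Icc.mpr ⟨hn, hnN⟩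
  have hc : -(1 / (Complex.I * ℏ)) = -(-Complex.I * (ℏ : ℂ)⁻¹) := by
    rw [one_div, mul_inv, Complex.inv_I]
  rw [Eraise, hc, mul_assoc _ (wWhit ℏ N γ), neg_mul, ← mul_neg, ← sum_neg_distrib]
  congr 1
  rw [mul_sum]
  refine sum_congr rfl fun j hj => ?_
  have key := prod_mul_wWhit_gzShift hℏ hmem hj γ
    (fun m hm => by simpa using hγ' (n + 1) hmem j hj m hm 1)
    (fun k hk => by
      have hk' := mem_Icc.mp hk
      simpa using hγ' n (mem_Icc.mpr ⟨by omega, by omega⟩) k hk j hj 0)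
  rw [div_mul_eq_mul_div, key, Nat.add_sub_cancel, neg_div, neg_neg]
  ring
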